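/- Assume φ₀ > 0 and ρ₀ = (φ₀ − 1)/(1 + φ₀). Then the set of critical points of X in the closed disk D_R consists of exactly two points: a point (x_c, 0) with x_c ∈ (−R, 0) at which det DX > 0 (a center), and the boundary point (R, 0) at which det DX = 0 (a degenerate singular point). (Case (g) of Theorem 1.) -/

import Mathlib

/-- The Jacobian matrix of a planar vector field `X : ℝ → ℝ → ℝ × ℝ` at the point `(x, y)`. -/
noncomputable def jacobianMatrix (X : ℝ → ℝ → ℝ × ℝ) (x y : ℝ) : Matrix (Fin 2) (Fin 2) ℝ :=
  !![deriv (fun s => (X s y).1) x, deriv (fun s => (X x s).1) y;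
     deriv (fun s => (X s y).2) x, deriv (fun s => (X x s).2) y]

/-!
In the complex coordinate `z = x + iy`, the critical points away from the singularities `p = r₀`
and `q = R²/r₀` are the solutions of `z̄ (z - p) (z - q) = c (p - q)`. The imaginary part of this
equation is `y (|z|² - pq) = 0`, so a critical point lies on the real axis or on the circle
`|z|² = pq = R²`.

The relation between `ρ₀` and `φ₀` says exactly that `R` itself is a solution. On the circle the
real part is affine in `x`, hence leaves only `x = R`. On the axis the cubic `x (x - p) (x - q)`
minus its value at `R` splits off `x - R`, and the remaining quadratic has one root in `(-R, 0)`
and one root beyond `R`. At an axial critical point `det DX` is a positive multiple of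
`(pq - x²) (3x² - 2(p + q)x + pq)`, which is positive for `-R < x < 0` and vanishes at `x = R`.
-/

open scoped ComplexConjugate

/-- The superposition of the rigid rotation with angular velocity `θ` and of two point vortices, of
circulation `-2πcθ` at `(p, 0)` and `2πcθ` at `(q, 0)`. The vortex in a disk of radius `R` is the
case in which `q = R ^ 2 / p` is the mirror image of `p`. The values at the two singular points
are an artefact of `1 / 0 = 0`. -/
noncomputable def vortexField (c θ p q x y : ℝ) : ℝ × ℝ :=
  (-θ * y + c * θ * y * (1 / ((x - p) ^ 2 + y ^ 2) - 1 / ((x - q) ^ 2 + y ^ 2)),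
   θ * x - c * θ * ((x - p) / ((x - p) ^ 2 + y ^ 2) - (x - q) / ((x - q) ^ 2 + y ^ 2)))

/-- The quadratic cofactor of `x - R` in `x * (x - p) * (x - q) - R * (R - p) * (R - q)` when
`p * q = R ^ 2`, written in terms of `s = p + q`. -/
def axialCofactor (R s x : ℝ) : ℝ :=
  x ^ 2 - (s - R) * x - R * (s - 2 * R)

section CriticalPoints

variable {c θ p q x y : ℝ}

theorem vortexField_fst_sub_snd_mul_I (c θ p q : ℝ) (z : ℂ) :
    ((vortexField c θ p q z.re z.im).1 : ℂ) - (vortexField c θ p q z.re z.im).2 * Complex.I =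
      -Complex.I * θ * (conj z - c * ((z - p)⁻¹ - (z - q)⁻¹)) := by
  apply Complex.ext <;>
    simp only [vortexField, Complex.sub_re, Complex.sub_im, Complex.mul_re, Complex.mul_im,
      Complex.neg_re, Complex.neg_im, Complex.inv_re, Complex.inv_im, Complex.normSq_apply,
      Complex.conj_re, Complex.conj_im, Complex.ofReal_re, Complex.ofReal_im, Complex.I_re,
      Complex.I_im] <;>
    ring

theorem vortexField_eq_zero_iff_complex (hθ : θ ≠ 0) {z : ℂ} (hp : z ≠ p) (hq : z ≠ q) :
    vortexField c θ p q z.re z.im = (0, 0) ↔ conj z * (z - p) * (z - q) = c * (p - q) := by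
  have hzero : vortexField c θ p q z.re z.im = (0, 0) ↔
      ((vortexField c θ p q z.re z.im).1 : ℂ) - (vortexField c θ p q z.re z.im).2 * Complex.I =
        0 := by
    simp [Complex.ext_iff, Prod.ext_iff]
  have hzp : z - p ≠ 0 := sub_ne_zero.mpr hp
  have hzq : z - q ≠ 0 := sub_ne_zero.mpr hq
  have hclear : (conj z - c * ((z - p)⁻¹ - (z - q)⁻¹)) * ((z - p) * (z - q)) =
      conj z * (z - p) * (z - q) - c * (p - q) := by
    field_simp
    ring
  rw [hzero, vortexField_fst_sub_snd_mul_I, ← sub_eq_zero (b := (c * (p - q) : ℂ)), ← hclear]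
  simp [hθ, hzp, hzq]

theorem vortexField_eq_zero_iff (hθ : θ ≠ 0) (hp : (x, y) ≠ (p, 0)) (hq : (x, y) ≠ (q, 0)) :
    vortexField c θ p q x y = (0, 0) ↔
      x * (x ^ 2 + y ^ 2 + p * q) - (p + q) * (x ^ 2 + y ^ 2) = c * (p - q) ∧
        y * (x ^ 2 + y ^ 2 - p * q) = 0 := by
  have hcomplex := vortexField_eq_zero_iff_complex (c := c) (z := ⟨x, y⟩) hθ
    (p := p) (q := q) (by simpa [Complex.ext_iff] using hp) (by simpa [Complex.ext_iff] using hq)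
  have hre : (conj (⟨x, y⟩ : ℂ) * (⟨x, y⟩ - p) * (⟨x, y⟩ - q)).re =
      x * (x ^ 2 + y ^ 2 + p * q) - (p + q) * (x ^ 2 + y ^ 2) := by
    simp only [Complex.mul_re, Complex.mul_im, Complex.sub_re, Complex.sub_im, Complex.conj_re,
      Complex.conj_im, Complex.ofReal_re, Complex.ofReal_im]
    ring
  have him : (conj (⟨x, y⟩ : ℂ) * (⟨x, y⟩ - p) * (⟨x, y⟩ - q)).im =
      y * (x ^ 2 + y ^ 2 - p * q) := by
    simp only [Complex.mul_re, Complex.mul_im, Complex.sub_re, Complex.sub_im, Complex.conj_re,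
      Complex.conj_im, Complex.ofReal_re, Complex.ofReal_im]
    ring
  rw [hcomplex, Complex.ext_iff, hre, him]
  simp

theorem vortexField_axis_eq_zero_iff (hθ : θ ≠ 0) (hp : x ≠ p) (hq : x ≠ q) :
    vortexField c θ p q x 0 = (0, 0) ↔ x * (x - p) * (x - q) = c * (p - q) := by
  have hcubic : x * (x ^ 2 + 0 ^ 2 + p * q) - (p + q) * (x ^ 2 + 0 ^ 2) =
      x * (x - p) * (x - q) := by
    ring
  rw [vortexField_eq_zero_iff hθ (by simpa using hp) (by simpa using hq), hcubic,
    and_iff_left (zero_mul _)]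

end CriticalPoints

section Jacobian

variable {c θ p q x : ℝ}

theorem vortexField_axis (c θ p q x : ℝ) :
    vortexField c θ p q x 0 = (0, θ * x - c * θ * ((x - p)⁻¹ - (x - q)⁻¹)) := by
  simp [vortexField, sq]

theorem hasDerivAt_vortexField_axis_snd (c θ : ℝ) (hp : x ≠ p) (hq : x ≠ q) :
    HasDerivAt (fun s => (vortexField c θ p q s 0).2)
      (θ * (1 + c * (1 / (x - p) ^ 2 - 1 / (x - q) ^ 2))) x := by
  have hinv (a : ℝ) (ha : x ≠ a) : HasDerivAt (fun s => (s - a)⁻¹) (-1 / (x - a) ^ 2) x :=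
    ((hasDerivAt_id x).sub_const a).fun_inv (sub_ne_zero.mpr ha)
  simp only [vortexField_axis]
  refine (((hasDerivAt_id x).const_mul θ).sub
    (((hinv p hp).sub (hinv q hq)).const_mul (c * θ))).congr_deriv ?_
  ring

theorem hasDerivAt_vortexField_fst_axis (c θ : ℝ) (hp : x ≠ p) (hq : x ≠ q) :
    HasDerivAt (fun s => (vortexField c θ p q x s).1)
      (-θ * (1 - c * (1 / (x - p) ^ 2 - 1 / (x - q) ^ 2))) 0 := by
  have hdiff (a : ℝ) (ha : x ≠ a) :
      DifferentiableAt ℝ (fun s : ℝ => 1 / ((x - a) ^ 2 + s ^ 2)) 0 := by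
    have : (x - a) ^ 2 + 0 ^ 2 ≠ 0 := by simpa using sub_ne_zero.mpr ha
    fun_prop (disch := assumption)
  refine (((hasDerivAt_id (0 : ℝ)).const_mul (-θ)).add
    (((hasDerivAt_id (0 : ℝ)).const_mul (c * θ)).mul
      ((hdiff p hp).sub (hdiff q hq)).hasDerivAt)).congr_deriv ?_
  simp only [Pi.sub_apply, id_eq]
  ring

theorem det_jacobianMatrix_vortexField_axis (c θ : ℝ) (hp : x ≠ p) (hq : x ≠ q) :
    (jacobianMatrix (vortexField c θ p q) x 0).det =
      θ ^ 2 * (1 - (c * (1 / (x - p) ^ 2 - 1 / (x - q) ^ 2)) ^ 2) := by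
  have hfst : deriv (fun s => (vortexField c θ p q s 0).1) x = 0 := by
    simp only [vortexField_axis, deriv_const]
  rw [jacobianMatrix, Matrix.det_fin_two_of, hfst,
    (hasDerivAt_vortexField_fst_axis c θ hp hq).deriv,
    (hasDerivAt_vortexField_axis_snd c θ hp hq).deriv]
  ring

theorem det_jacobianMatrix_vortexField_of_axis_eq_zero (hθ : θ ≠ 0) (hp : x ≠ p) (hq : x ≠ q)
    (hcrit : vortexField c θ p q x 0 = (0, 0)) :
    (jacobianMatrix (vortexField c θ p q) x 0).det =
      θ ^ 2 * ((p * q - x ^ 2) * (3 * x ^ 2 - 2 * (p + q) * x + p * q)) /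
        ((x - p) * (x - q)) ^ 2 := by
  rw [vortexField_axis_eq_zero_iff hθ hp hq] at hcrit
  have hxp : x - p ≠ 0 := sub_ne_zero.mpr hp
  have hxq : x - q ≠ 0 := sub_ne_zero.mpr hq
  have hstrain : c * (1 / (x - p) ^ 2 - 1 / (x - q) ^ 2) =
      x * (2 * x - p - q) / ((x - p) * (x - q)) := by
    field_simp
    linear_combination (p + q - 2 * x) * hcrit
  rw [det_jacobianMatrix_vortexField_axis c θ hp hq, hstrain]
  field_simp
  ring

theorem det_jacobianMatrix_vortexField_pos (hθ : θ ≠ 0) (hp : 0 < p) (hq : 0 < q) (hx : x < 0)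
    (hxpq : x ^ 2 < p * q) (hcrit : vortexField c θ p q x 0 = (0, 0)) :
    0 < (jacobianMatrix (vortexField c θ p q) x 0).det := by
  have hxp : x ≠ p := (hx.trans hp).ne
  have hxq : x ≠ q := (hx.trans hq).ne
  have hgap : 0 < p * q - x ^ 2 := sub_pos.mpr hxpq
  have hslope : 0 < 3 * x ^ 2 - 2 * (p + q) * x + p * q := by
    linarith [sq_nonneg x, mul_pos hp hq, mul_neg_of_pos_of_neg (add_pos hp hq) hx]
  have hden : 0 < ((x - p) * (x - q)) ^ 2 :=
    sq_pos_of_ne_zero (mul_ne_zero (sub_ne_zero.mpr hxp) (sub_ne_zero.mpr hxq))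
  rw [det_jacobianMatrix_vortexField_of_axis_eq_zero hθ hxp hxq hcrit]
  exact div_pos (mul_pos (sq_pos_of_ne_zero hθ) (mul_pos hgap hslope)) hden

theorem det_jacobianMatrix_vortexField_eq_zero (hθ : θ ≠ 0) (hp : x ≠ p) (hq : x ≠ q)
    (hxpq : x ^ 2 = p * q) (hcrit : vortexField c θ p q x 0 = (0, 0)) :
    (jacobianMatrix (vortexField c θ p q) x 0).det = 0 := by
  simp [det_jacobianMatrix_vortexField_of_axis_eq_zero hθ hp hq hcrit, hxpq]

end Jacobian

section AxialCofactor

variable {R s x x' : ℝ}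

theorem exists_axialCofactor_eq_zero (hR : 0 < R) (hs : 2 * R < s) :
    ∃ x ∈ Set.Ioo (-R) 0, axialCofactor R s x = 0 := by
  have hcont : ContinuousOn (axialCofactor R s) (Set.Icc (-R) 0) := by
    unfold axialCofactor
    fun_prop
  have hleft : 0 < axialCofactor R s (-R) := by
    have : axialCofactor R s (-R) = 2 * R ^ 2 := by unfold axialCofactor; ring
    rw [this]
    positivity
  have hright : axialCofactor R s 0 < 0 := by
    have : axialCofactor R s 0 = -(R * (s - 2 * R)) := by unfold axialCofactor; ring
    rw [this]
    exact neg_neg_of_pos (mul_pos hR (sub_pos.mpr hs))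
  exact intermediate_value_Ioo' (neg_nonpos.mpr hR.le) hcont ⟨hright, hleft⟩

theorem eq_of_axialCofactor_eq_zero (hs : 2 * R < s) (hx : x < 0) (hx' : x' ≤ R)
    (hroot : axialCofactor R s x = 0) (hroot' : axialCofactor R s x' = 0) : x' = x := by
  unfold axialCofactor at hroot hroot'
  have hfactor : (x' - x) * (x' + x - (s - R)) = 0 := by
    linear_combination hroot' - hroot
  have hsum : x' + x - (s - R) ≠ 0 := by linarith
  exact sub_eq_zero.mp ((mul_eq_zero.mp hfactor).resolve_right hsum)

end AxialCofactor

section RadiusCritical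

variable {R c θ p q x y : ℝ}

theorem two_mul_lt_add_of_mul_eq_sq (hp : 0 < p) (hpR : p ≠ R) (hpq : p * q = R ^ 2) :
    2 * R < p + q := by
  have hsq : 0 < (p - R) ^ 2 := sq_pos_of_ne_zero (sub_ne_zero.mpr hpR)
  have hmul : p * (p + q - 2 * R) = (p - R) ^ 2 := by linear_combination hpq
  exact sub_pos.mp (pos_of_mul_pos_right (hmul ▸ hsq) hp.le)

theorem radius_equation_of_curve (hR : R ≠ 0) (hp : p ≠ 0) (hφ : 0 < R ^ 2 / c)
    (hcurve : p / R = (R ^ 2 / c - 1) / (1 + R ^ 2 / c)) (hpq : p * q = R ^ 2) :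
    R * (R - p) * (R - q) = c * (p - q) := by
  have hc : c ≠ 0 := by
    rintro rfl
    simp at hφ
  have hlinear : c * (R + p) = R ^ 2 * (R - p) := by
    rw [div_eq_div_iff hR (by positivity)] at hcurve
    field_simp at hcurve
    linear_combination hcurve
  apply mul_left_cancel₀ hp
  linear_combination (R - p) * hlinear + (c - R * (R - p)) * hpq

theorem axis_equation_iff (hpq : p * q = R ^ 2)
    (hradius : R * (R - p) * (R - q) = c * (p - q)) :
    x * (x - p) * (x - q) = c * (p - q) ↔ x = R ∨ axialCofactor R (p + q) x = 0 := by
  have hfactor : x * (x - p) * (x - q) - c * (p - q) =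
      (x - R) * axialCofactor R (p + q) x := by
    unfold axialCofactor
    linear_combination hradius + (x - R) * hpq
  rw [← sub_eq_zero, hfactor, mul_eq_zero, sub_eq_zero]

theorem snd_eq_zero_of_vortexField_eq_zero (hR : R ≠ 0) (hθ : θ ≠ 0) (hpq : p * q = R ^ 2)
    (hradius : R * (R - p) * (R - q) = c * (p - q)) (hcrit : vortexField c θ p q x y = (0, 0)) :
    y = 0 := by
  by_contra hy
  have hsing (a : ℝ) : (x, y) ≠ (a, 0) := fun h => hy (congrArg Prod.snd h)
  obtain ⟨hre, him⟩ := (vortexField_eq_zero_iff hθ (hsing p) (hsing q)).mp hcrit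
  have hcircle : x ^ 2 + y ^ 2 = R ^ 2 := by
    rw [← hpq]
    exact sub_eq_zero.mp ((mul_eq_zero.mp him).resolve_left hy)
  have hx : x = R := by
    apply mul_left_cancel₀ (pow_ne_zero 2 hR)
    linear_combination (hre - hradius + (R - x) * hpq - (x - p - q) * hcircle) / 2
  exact hy (pow_eq_zero_iff two_ne_zero |>.mp (by simpa [hx] using hcircle))

end RadiusCritical

/-- case (g) of Theorem 1: for `φ₀ > 0` and `ρ₀ = (φ₀ − 1)/(1 + φ₀)` the
critical points of `X` in `D_R` are exactly a center `(x_c, 0)` with `x_c ∈ (−R, 0)`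
and the degenerate boundary point `(R, 0)`. -/
theorem case_g_center_and_degenerate_saddle
    (R r₀ θ₀ Γ : ℝ)
    (hR : 0 < R) (hr₀ : 0 < r₀) (hrR : r₀ < R) (hθ : θ₀ ≠ 0) (hΓ : Γ ≠ 0)
    (c ρ₀ φ₀ : ℝ) (hc : c = Γ / (2 * Real.pi * θ₀))
    (hρ : ρ₀ = r₀ / R) (hφ : φ₀ = R ^ 2 / c) (hφpos : 0 < φ₀)
    (hcurve : ρ₀ = (φ₀ - 1) / (1 + φ₀))
    (X : ℝ → ℝ → ℝ × ℝ)
    (hX : ∀ x y : ℝ, X x y =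
      (-θ₀ * y + c * θ₀ * y *
          (1 / ((x - r₀) ^ 2 + y ^ 2) - 1 / ((x - R ^ 2 / r₀) ^ 2 + y ^ 2)),
       θ₀ * x - c * θ₀ *
          ((x - r₀) / ((x - r₀) ^ 2 + y ^ 2) -
            (x - R ^ 2 / r₀) / ((x - R ^ 2 / r₀) ^ 2 + y ^ 2)))) :
    ∃ xc : ℝ,
      (-R < xc ∧ xc < 0) ∧ X xc 0 = (0, 0) ∧ 0 < (jacobianMatrix X xc 0).det ∧
      X R 0 = (0, 0) ∧ (jacobianMatrix X R 0).det = 0 ∧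
      (∀ x y : ℝ, x ^ 2 + y ^ 2 ≤ R ^ 2 → (x, y) ≠ (r₀, 0) → X x y = (0, 0) →
        (x, y) = (xc, 0) ∨ (x, y) = (R, 0)) := by
  obtain rfl : X = vortexField c θ₀ r₀ (R ^ 2 / r₀) := funext₂ hX
  subst hρ hφ
  have hpq : r₀ * (R ^ 2 / r₀) = R ^ 2 := mul_div_cancel₀ _ hr₀.ne'
  have hRq : R < R ^ 2 / r₀ := by rw [lt_div_iff₀ hr₀, sq]; gcongr
  have hradius := radius_equation_of_curve hR.ne' hr₀.ne' hφpos hcurve hpq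
  generalize R ^ 2 / r₀ = q at *
  have hs := two_mul_lt_add_of_mul_eq_sq hr₀ hrR.ne hpq
  have haxis {x : ℝ} (hp : x ≠ r₀) (hq : x ≠ q) : vortexField c θ₀ r₀ q x 0 = (0, 0) ↔
      x = R ∨ axialCofactor R (r₀ + q) x = 0 :=
    (vortexField_axis_eq_zero_iff hθ hp hq).trans (axis_equation_iff hpq hradius)
  obtain ⟨xc, ⟨hRxc, hxc⟩, hroot⟩ := exists_axialCofactor_eq_zero hR hs
  have hcenter := (haxis (hxc.trans hr₀).ne (hxc.trans (hR.trans hRq)).ne).mpr (.inr hroot)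
  have hxcq : xc ^ 2 < r₀ * q := hpq ▸ sq_lt_sq' hRxc (hxc.trans hR)
  have hboundary := (haxis hrR.ne' hRq.ne).mpr (.inl rfl)
  refine ⟨xc, ⟨hRxc, hxc⟩, hcenter, ?_, hboundary, ?_, fun x y hdisk hsing hcrit => ?_⟩
  · exact det_jacobianMatrix_vortexField_pos hθ hr₀ (hR.trans hRq) hxc hxcq hcenter
  · exact det_jacobianMatrix_vortexField_eq_zero hθ hrR.ne' hRq.ne hpq.symm hboundary
  · obtain rfl := snd_eq_zero_of_vortexField_eq_zero hR.ne' hθ hpq hradius hcrit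
    have hxR : x ≤ R := le_of_sq_le_sq (by simpa using hdisk) hR.le
    refine ((haxis (by simpa using hsing) (hxR.trans_lt hRq).ne).mp hcrit).symm.imp ?_ ?_
    · exact fun hx => by rw [eq_of_axialCofactor_eq_zero hs hxc hxR hroot hx]
    · exact fun hx => by rw [hx]
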